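/- Let A be a finite-dimensional real affine space over V with dim V = n, let g ≠ 0 be a symmetric bilinear form on V, and let (R_0, …, R_n) be an affine basis of A with barycentric coordinate functions w_0, …, w_n. Let δ^g_R be the unique quadratic function A → ℝ with Hessian g that vanishes at every R_i. Then (w_0, …, w_n, δ^g_R) is a basis of W_g, and its dual basis in the dual space of W_g is (ev_{R_0}, …, ev_{R_n}, v_m). -/

import Mathlib

/-!
The point is that a quadratic function with zero Hessian is affine: the defining identities then
say that it respects every `AffineMap.lineMap` (`lineMap_of_hessian_zero`), and a function on a real
affine space that respects lines is an affine map, hence is determined by its values on an affine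
basis (`eq_sum_coord`). If `δ` has Hessian `lam • g`, then `δ - lam • δR` has zero Hessian and the
same values as `δ` at the points of the affine basis, which gives the expansion of `δ`. Together
with the closure of `W_g` under linear combinations this identifies the span. For linear
independence, evaluation at the basis points kills the coefficients of the barycentric coordinates;
the remaining coefficient vanishes since `δR ≠ 0`, its Hessian being nonzero.
-/

/-- A function `δ : A → ℝ` on a real affine space is *quadratic* if for all points
`P, Q` and all `α, β ∈ ℝ` with `α + β = 1`,
`δ(α·P + β·Q) = α(α−β)·δ(P) + β(β−α)·δ(Q) + 4αβ·δ(midpoint(P,Q))`. -/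
def IsQuadraticFn {V A : Type*} [AddCommGroup V] [Module ℝ V] [AddTorsor V A]
    (δ : A → ℝ) : Prop :=
  ∀ (P Q : A) (α β : ℝ), α + β = 1 →
    δ (AffineMap.lineMap P Q β) =
      α * (α - β) * δ P + β * (β - α) * δ Q + 4 * α * β * δ (midpoint ℝ P Q)

/-- `B` is the Hessian of `δ`:
`2δ(P) + 2δ(Q) − 4δ(midpoint(P,Q)) = (1/2)·B(Q−P, Q−P)` for all `P, Q`. -/
def IsHessianOf {V A : Type*} [AddCommGroup V] [Module ℝ V] [AddTorsor V A]
    (δ : A → ℝ) (B : LinearMap.BilinForm ℝ V) : Prop :=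
  ∀ P Q : A, 2 * δ P + 2 * δ Q - 4 * δ (midpoint ℝ P Q) =
    (1/2 : ℝ) * B (Q -ᵥ P) (Q -ᵥ P)

section QuadraticFunctions

variable {V A : Type*} [AddCommGroup V] [Module ℝ V] [AddTorsor V A]

/-- The space `W_g` of quadratic functions whose Hessian is a scalar multiple of `g`, as a submodule
of all functions `A → ℝ`. -/
def quadraticSpace (A : Type*) [AddTorsor V A] (g : LinearMap.BilinForm ℝ V) :
    Submodule ℝ (A → ℝ) where
  carrier := {δ | IsQuadraticFn δ ∧ ∃ c : ℝ, IsHessianOf δ (c • g)}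
  zero_mem' := ⟨fun P Q α β _ => by simp, 0, fun P Q => by simp⟩
  add_mem' := by
    rintro δ ε ⟨hδ, c, hc⟩ ⟨hε, d, hd⟩
    refine ⟨fun P Q α β h => ?_, c + d, fun P Q => ?_⟩
    · simp only [Pi.add_apply, hδ P Q α β h, hε P Q α β h]
      ring
    · have h1 := hc P Q
      have h2 := hd P Q
      simp only [Pi.add_apply, LinearMap.smul_apply, smul_eq_mul] at h1 h2 ⊢
      linear_combination h1 + h2
  smul_mem' := by
    rintro t δ ⟨hδ, c, hc⟩
    refine ⟨fun P Q α β h => ?_, t * c, fun P Q => ?_⟩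
    · simp only [Pi.smul_apply, smul_eq_mul, hδ P Q α β h]
      ring
    · have h1 := hc P Q
      simp only [Pi.smul_apply, LinearMap.smul_apply, smul_eq_mul] at h1 ⊢
      linear_combination t * h1

lemma affineMap_mem_quadraticSpace (g : LinearMap.BilinForm ℝ V) (f : A →ᵃ[ℝ] ℝ) :
    ⇑f ∈ quadraticSpace A g := by
  have hmid : ∀ P Q : A, f (midpoint ℝ P Q) = (f P + f Q) / 2 := fun P Q => by
    rw [AffineMap.map_midpoint, midpoint_eq_smul_add]
    simp only [invOf_eq_inv, smul_eq_mul]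
    ring
  refine ⟨fun P Q α β h => ?_, 0, fun P Q => ?_⟩
  · obtain rfl : α = 1 - β := by linarith
    rw [AffineMap.apply_lineMap, AffineMap.lineMap_apply_ring', hmid]
    ring
  · rw [hmid]
    simp only [zero_smul, LinearMap.zero_apply]
    ring

lemma lineMap_of_hessian_zero {e : A → ℝ} (hq : IsQuadraticFn e)
    (hh : IsHessianOf e (0 : LinearMap.BilinForm ℝ V)) (P Q : A) (t : ℝ) :
    e (AffineMap.lineMap P Q t) = (1 - t) * e P + t * e Q := by
  have h1 := hq P Q (1 - t) t (by ring)
  have h2 := hh P Q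
  simp only [LinearMap.zero_apply] at h2
  linear_combination h1 - (1 - t) * t * h2

/-- A function that respects lines is affine, and so is interpolated by its values on an affine
basis. -/
lemma eq_sum_coord {ι : Type*} [Fintype ι] (b : AffineBasis ι ℝ A) {e : A → ℝ}
    (he : ∀ (P Q : A) (t : ℝ), e (AffineMap.lineMap P Q t) = (1 - t) * e P + t * e Q) (X : A) :
    e X = ∑ i, e (b i) * b.coord i X := by
  have hsmul : ∀ (t : ℝ) (v : V), e (t • v +ᵥ X) - e X = t * (e (v +ᵥ X) - e X) := fun t v => by
    have := he X (v +ᵥ X) t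
    rw [AffineMap.lineMap_apply, vadd_vsub] at this
    rw [this]
    ring
  have hadd : ∀ u v : V,
      e ((u + v) +ᵥ X) - e X = (e (u +ᵥ X) - e X) + (e (v +ᵥ X) - e X) := fun u v => by
    -- The midpoint of `u + X` and `v + X` is also the midpoint of `X` and `(u + v) + X`.
    have h1 := he (u +ᵥ X) (v +ᵥ X) (1 / 2)
    have h2 := hsmul (1 / 2) (u + v)
    have h3 : AffineMap.lineMap (u +ᵥ X) (v +ᵥ X) (1 / 2 : ℝ) = ((1 / 2 : ℝ) • (u + v)) +ᵥ X := by
      rw [AffineMap.lineMap_apply, vadd_vsub_vadd_cancel_right, vadd_vadd]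
      congr 1
      module
    rw [h3] at h1
    linear_combination 2 * h1 - 2 * h2
  let f : A →ᵃ[ℝ] ℝ := AffineMap.mk' e
    { toFun := fun v => e (v +ᵥ X) - e X
      map_add' := hadd
      map_smul' := hsmul } X (fun P => by simp)
  have h := congrArg f (b.affineCombination_coord_eq_self X)
  rw [Finset.map_affineCombination _ _ _ (b.sum_coord_apply_eq_one X),
    Finset.affineCombination_eq_linear_combination _ _ _ (b.sum_coord_apply_eq_one X)] at h
  calc e X = _ := h.symm
    _ = _ := Finset.sum_congr rfl fun i _ => mul_comm _ _

/-- A symmetric form is determined by its diagonal, so a function with nonzero Hessian does not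
vanish identically. -/
lemma exists_ne_zero_of_hessian (g : LinearMap.BilinForm ℝ V) (hgs : ∀ x y, g x y = g y x)
    (hg0 : g ≠ 0) {δ : A → ℝ} (hδ : IsHessianOf δ g) : ∃ X, δ X ≠ 0 := by
  by_contra! hz
  obtain ⟨P⟩ : Nonempty A := inferInstance
  have hd : ∀ v, g v v = 0 := fun v => by
    have := hδ P (v +ᵥ P)
    simp only [hz, vadd_vsub] at this
    linarith
  refine hg0 (LinearMap.ext₂ fun x y => ?_)
  have h1 := hd (x + y)
  simp only [map_add, LinearMap.add_apply, hd, hgs y x] at h1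
  simp only [LinearMap.zero_apply]
  linarith

lemma eq_sum_coord_add {ι : Type*} [Fintype ι] (b : AffineBasis ι ℝ A)
    {g : LinearMap.BilinForm ℝ V} {δR : A → ℝ} (hδRq : IsQuadraticFn δR)
    (hδRh : IsHessianOf δR g) (hδR0 : ∀ i, δR (b i) = 0)
    {δ : A → ℝ} {lam : ℝ} (hq : IsQuadraticFn δ) (hh : IsHessianOf δ (lam • g)) (X : A) :
    δ X = (∑ i, δ (b i) * b.coord i X) + lam * δR X := by
  have hq' : IsQuadraticFn (fun Y => δ Y - lam * δR Y) := fun P Q α β h => by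
    simp only [hq P Q α β h, hδRq P Q α β h]
    ring
  have hh' : IsHessianOf (fun Y => δ Y - lam * δR Y) (0 : LinearMap.BilinForm ℝ V) :=
    fun P Q => by
      have h1 := hh P Q
      have h2 := hδRh P Q
      simp only [LinearMap.smul_apply, LinearMap.zero_apply, smul_eq_mul] at h1 ⊢
      linear_combination h1 - lam * h2
  have h := eq_sum_coord b (lineMap_of_hessian_zero hq' hh') X
  simp only [hδR0, mul_zero, sub_zero] at h
  linarith

end QuadraticFunctions

/-- Let `g ≠ 0` be a symmetric bilinear form on `V`, let
`(R_0, …, R_n)` be an affine basis of `A` with barycentric coordinate functions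
`w_0, …, w_n`, and let `δ^g_R` be the (unique) quadratic function with Hessian `g`
vanishing at every `R_i`.  Then `(w_0, …, w_n, δ^g_R)` is a basis of `W_g` (the space
of quadratic functions whose Hessian is a scalar multiple of `g`): linearly
independent, spanning exactly `W_g`; and its dual basis is `(ev_{R_0}, …, ev_{R_n},
v_m)`, i.e. every `δ ∈ W_g` with Hessian `λ·g` satisfies
`δ = Σᵢ δ(Rᵢ)·wᵢ + λ·δ^g_R`. -/
theorem stmt12 {V A : Type*} [AddCommGroup V] [Module ℝ V] [AddTorsor V A]
    [FiniteDimensional ℝ V] {n : ℕ} (hn : Module.finrank ℝ V = n)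
    (b : AffineBasis (Fin (n + 1)) ℝ A)
    (g : LinearMap.BilinForm ℝ V) (hgs : ∀ x y, g x y = g y x) (hg0 : g ≠ 0)
    (δR : A → ℝ) (hδRq : IsQuadraticFn δR) (hδRh : IsHessianOf δR g)
    (hδR0 : ∀ i : Fin (n + 1), δR (b i) = 0) :
    LinearIndependent ℝ (fun i : Fin (n + 2) =>
        if h : (i : ℕ) < n + 1 then ⇑(b.coord ⟨(i : ℕ), h⟩) else δR) ∧
    (∀ δ : A → ℝ,
      δ ∈ Submodule.span ℝ (Set.range (fun i : Fin (n + 2) =>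
          if h : (i : ℕ) < n + 1 then ⇑(b.coord ⟨(i : ℕ), h⟩) else δR)) ↔
        (IsQuadraticFn δ ∧ ∃ c : ℝ, IsHessianOf δ (c • g))) ∧
    (∀ (δ : A → ℝ) (lam : ℝ), IsQuadraticFn δ → IsHessianOf δ (lam • g) →
        ∀ X : A, δ X =
          (∑ i : Fin (n + 1), δ (b i) * b.coord i X) + lam * δR X) := by
  have expand := fun (δ : A → ℝ) (lam : ℝ) (hq : IsQuadraticFn δ)
    (hh : IsHessianOf δ (lam • g)) (X : A) => eq_sum_coord_add b hδRq hδRh hδR0 hq hh X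
  set F : Fin (n + 2) → A → ℝ := fun i =>
    if h : (i : ℕ) < n + 1 then ⇑(b.coord ⟨(i : ℕ), h⟩) else δR
  have hFc : ∀ i : Fin (n + 1), F i.castSucc = ⇑(b.coord i) := fun i => dif_pos i.isLt
  have hFl : F (Fin.last (n + 1)) = δR := dif_neg (lt_irrefl (n + 1))
  refine ⟨?_, fun δ => ⟨fun h => ?_, ?_⟩, expand⟩
  · rw [Fintype.linearIndependent_iff]
    intro c hc
    rw [Fin.sum_univ_castSucc] at hc
    simp only [hFc, hFl] at hc
    have hcX : ∀ X, (∑ i : Fin (n + 1), c i.castSucc * b.coord i X)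
        + c (Fin.last (n + 1)) * δR X = 0 := fun X => by
      simpa using congrFun hc X
    have h0 : ∀ j : Fin (n + 1), c j.castSucc = 0 := fun j => by
      simpa [hδR0, AffineBasis.coord_apply] using hcX (b j)
    obtain ⟨X, hX⟩ := exists_ne_zero_of_hessian g hgs hg0 hδRh
    have hl : c (Fin.last (n + 1)) = 0 := by simpa [h0, hX] using hcX X
    exact fun i => Fin.lastCases hl h0 i
  · have hle : Submodule.span ℝ (Set.range F) ≤ quadraticSpace A g := by
      rw [Submodule.span_le]
      rintro _ ⟨i, rfl⟩
      induction i using Fin.lastCases with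
      | last => exact hFl ▸ ⟨hδRq, 1, by rwa [one_smul]⟩
      | cast i => exact hFc i ▸ affineMap_mem_quadraticSpace g (b.coord i)
    exact hle h
  · rintro ⟨hq, c, hh⟩
    have hδ : δ = (∑ i : Fin (n + 1), δ (b i) • F i.castSucc) + c • F (Fin.last (n + 1)) := by
      funext X
      simp [hFc, hFl, expand δ c hq hh X]
    rw [hδ]
    exact add_mem
      (sum_mem fun i _ => Submodule.smul_mem _ _ (Submodule.subset_span ⟨_, rfl⟩))
      (Submodule.smul_mem _ _ (Submodule.subset_span ⟨_, rfl⟩))
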